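/- arXiv:2406.10605 — 4 statements merged into one kernel-verified Lean document; each statement's English description precedes it below -/
import Mathlib

section
/- For every η > 0, the point e = (1/2, 1/2, 1/2, 1/2) is a fixed point of G₁∘G₂, the map G₁∘G₂ is differentiable at e, and both λ₊ = η²/2 + √((η²+η+1)·(η²−η+1))/2 + 1/2 and λ₋ = η²/2 − √((η²+η+1)·(η²−η+1))/2 + 1/2 are real eigenvalues of the Fréchet derivative of G₁∘G₂ at e, with λ₊ > 1 and λ₋ < 1. -/
/-- Two-step OMWU transition map for even starting time. -/
noncomputable def G1 (η : ℝ) (z : EuclideanSpace ℝ (Fin 4)) : EuclideanSpace ℝ (Fin 4) :=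
  !₂[z 1,
    z 1 * Real.exp (3*η - 2*η * z 3 - η * z 2) /
      (z 1 * Real.exp (3*η - 2*η * z 3 - η * z 2)
        + (1 - z 1) * Real.exp (2*η * z 3 + η * z 2)),
    z 3,
    z 3 * Real.exp (-(3*η) + 2*η * z 1 + η * z 0) /
      (z 3 * Real.exp (-(3*η) + 2*η * z 1 + η * z 0)
        + (1 - z 3) * Real.exp (-(2*η * z 1) - η * z 0))]

/-- Two-step OMWU transition map for odd starting time. -/
noncomputable def G2 (η : ℝ) (z : EuclideanSpace ℝ (Fin 4)) : EuclideanSpace ℝ (Fin 4) :=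
  !₂[z 1,
    z 1 * Real.exp (-(3*η) + 2*η * z 3 + η * z 2) /
      (z 1 * Real.exp (-(3*η) + 2*η * z 3 + η * z 2)
        + (1 - z 1) * Real.exp (-(2*η * z 3) - η * z 2)),
    z 3,
    z 3 * Real.exp (3*η - 2*η * z 1 - η * z 0) /
      (z 3 * Real.exp (3*η - 2*η * z 1 - η * z 0)
        + (1 - z 3) * Real.exp (2*η * z 1 + η * z 0))]

abbrev E4 := EuclideanSpace ℝ (Fin 4)

lemma softstep {x a b : E4 → ℝ} {x' a' b' : E4 →L[ℝ] ℝ} {p : E4}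
    (hx : HasFDerivAt x x' p) (ha : HasFDerivAt a a' p) (hb : HasFDerivAt b b' p)
    (h0 : x p = 1/2) (hab : a p = b p) :
    HasFDerivAt (fun z => x z * Real.exp (a z) / (x z * Real.exp (a z) + (1 - x z) * Real.exp (b z)))
      (x' + (1/4 : ℝ) • (a' - b')) p := by
  have hn := hx.mul ha.exp
  have hd := hn.add ((hx.const_sub 1).mul hb.exp)
  have hpos := Real.exp_pos (b p)
  have hne : x p * Real.exp (a p) + (1 - x p) * Real.exp (b p) ≠ 0 := by
    rw [h0, hab]; ring_nf; positivity
  have hi := (hasDerivAt_inv hne).comp_hasFDerivAt p hd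
  have := hn.mul hi
  refine this.congr_fderiv ?_
  ext v
  simp [h0, hab]
  field_simp
  ring

noncomputable def pr (i : Fin 4) : E4 →L[ℝ] ℝ := EuclideanSpace.proj i

@[simp] lemma pr_apply (i : Fin 4) (v : E4) : pr i v = v i := rfl

lemma hpr (i : Fin 4) (p : E4) : HasFDerivAt (fun z : E4 => z i) (pr i) p :=
  (pr i).hasFDerivAt

noncomputable def mk4 (f : Fin 4 → (E4 →L[ℝ] ℝ)) : E4 →L[ℝ] E4 :=
  (EuclideanSpace.equiv (Fin 4) ℝ).symm.toContinuousLinearMap.comp (ContinuousLinearMap.pi f)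

lemma mk4_apply (f : Fin 4 → (E4 →L[ℝ] ℝ)) (v : E4) (i : Fin 4) : mk4 f v i = f i v := rfl

/-- derivative of `G1` (`s = -1`) and `G2` (`s = 1`) -/
noncomputable def DG (s : ℝ) : E4 →L[ℝ] E4 :=
  mk4 ![pr 1, pr 1 + s • pr 3 + (s/2) • pr 2, pr 3, pr 3 - s • pr 1 - (s/2) • pr 0]

lemma hG1 (η : ℝ) : HasFDerivAt (G1 η) (DG (-η)) (!₂[1/2, 1/2, 1/2, 1/2] : E4) := by
  rw [← hasFDerivWithinAt_univ, hasFDerivWithinAt_euclidean]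
  intro i
  rw [hasFDerivWithinAt_univ]
  fin_cases i
  · exact (hpr 1 _).congr_fderiv (by ext v; simp [DG, mk4_apply])
  · have ha := (((hpr 3 (!₂[1/2, 1/2, 1/2, 1/2] : E4)).const_mul (2*η)).const_sub (3*η)).sub
      ((hpr 2 _).const_mul η)
    have hb := ((hpr 3 (!₂[1/2, 1/2, 1/2, 1/2] : E4)).const_mul (2*η)).add
      ((hpr 2 _).const_mul η)
    refine (softstep (hpr 1 _) ha hb (by simp) (by simp; ring)).congr_fderiv ?_
    ext v; simp [DG, mk4_apply]; ring
  · exact (hpr 3 _).congr_fderiv (by ext v; simp [DG, mk4_apply])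
  · have ha := (((hpr 1 (!₂[1/2, 1/2, 1/2, 1/2] : E4)).const_mul (2*η)).const_add (-(3*η))).add
      ((hpr 0 _).const_mul η)
    have hb := ((hpr 1 (!₂[1/2, 1/2, 1/2, 1/2] : E4)).const_mul (2*η)).neg.sub
      ((hpr 0 _).const_mul η)
    refine (softstep (hpr 3 _) ha hb (by simp) (by simp; ring)).congr_fderiv ?_
    ext v; simp [DG, mk4_apply]; ring

lemma hG2 (η : ℝ) : HasFDerivAt (G2 η) (DG η) (!₂[1/2, 1/2, 1/2, 1/2] : E4) := by
  rw [← hasFDerivWithinAt_univ, hasFDerivWithinAt_euclidean]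
  intro i
  rw [hasFDerivWithinAt_univ]
  fin_cases i
  · exact (hpr 1 _).congr_fderiv (by ext v; simp [DG, mk4_apply])
  · have ha := (((hpr 3 (!₂[1/2, 1/2, 1/2, 1/2] : E4)).const_mul (2*η)).const_add (-(3*η))).add
      ((hpr 2 _).const_mul η)
    have hb := ((hpr 3 (!₂[1/2, 1/2, 1/2, 1/2] : E4)).const_mul (2*η)).neg.sub
      ((hpr 2 _).const_mul η)
    refine (softstep (hpr 1 _) ha hb (by simp) (by simp; ring)).congr_fderiv ?_
    ext v; simp [DG, mk4_apply]; ring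
  · exact (hpr 3 _).congr_fderiv (by ext v; simp [DG, mk4_apply])
  · have ha := (((hpr 1 (!₂[1/2, 1/2, 1/2, 1/2] : E4)).const_mul (2*η)).const_sub (3*η)).sub
      ((hpr 0 _).const_mul η)
    have hb := ((hpr 1 (!₂[1/2, 1/2, 1/2, 1/2] : E4)).const_mul (2*η)).add
      ((hpr 0 _).const_mul η)
    refine (softstep (hpr 3 _) ha hb (by simp) (by simp; ring)).congr_fderiv ?_
    ext v; simp [DG, mk4_apply]; ring

lemma softfix (a b : ℝ) (h : a = b) :
    (1/2 : ℝ) * Real.exp a / (1/2 * Real.exp a + (1 - 1/2) * Real.exp b) = 1/2 := by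
  subst h
  have := Real.exp_pos a
  field_simp
  ring

lemma fix1 (η : ℝ) : G1 η (!₂[1/2, 1/2, 1/2, 1/2] : E4) = !₂[1/2, 1/2, 1/2, 1/2] := by
  ext i
  fin_cases i
  · rfl
  · exact softfix _ _ (by simp; ring)
  · rfl
  · exact softfix _ _ (by simp; ring)

lemma fix2 (η : ℝ) : G2 η (!₂[1/2, 1/2, 1/2, 1/2] : E4) = !₂[1/2, 1/2, 1/2, 1/2] := by
  ext i
  fin_cases i
  · rfl
  · exact softfix _ _ (by simp; ring)
  · rfl
  · exact softfix _ _ (by simp; ring)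

lemma eig (η l : ℝ) (hl : l^2 = (1+η^2)*l - η^2/4) :
    Module.End.HasEigenvalue ((DG (-η)).comp (DG η)).toLinearMap l := by
  apply Module.End.hasEigenvalue_of_hasEigenvector (x := (!₂[1, l, -η, η/2] : E4))
  rw [Module.End.hasEigenvector_iff, Module.End.mem_eigenspace_iff]
  constructor
  · ext i
    fin_cases i <;> simp [DG, mk4_apply] <;> linarith
  · intro h
    have := congrArg (fun v : E4 => v 0) h
    simp at this

/-- `(1/2,1/2,1/2,1/2)` is a fixed point of `G₁∘G₂`, the map is differentiable there,
and `η²/2 ± √((η²+η+1)(η²−η+1))/2 + 1/2` are eigenvalues of its Fréchet derivative,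
the first being `> 1` and the second `< 1`. -/
theorem omwu_two_step_eigenvalues_at_equilibrium (η : ℝ) (hη : 0 < η) :
    (G1 η ∘ G2 η) (!₂[1/2, 1/2, 1/2, 1/2] : EuclideanSpace ℝ (Fin 4)) = !₂[1/2, 1/2, 1/2, 1/2] ∧
    DifferentiableAt ℝ (G1 η ∘ G2 η) (!₂[1/2, 1/2, 1/2, 1/2] : EuclideanSpace ℝ (Fin 4)) ∧
    Module.End.HasEigenvalue
      (fderiv ℝ (G1 η ∘ G2 η) (!₂[1/2, 1/2, 1/2, 1/2] : EuclideanSpace ℝ (Fin 4))).toLinearMap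
      (η^2/2 + Real.sqrt ((η^2+η+1)*(η^2-η+1))/2 + 1/2) ∧
    Module.End.HasEigenvalue
      (fderiv ℝ (G1 η ∘ G2 η) (!₂[1/2, 1/2, 1/2, 1/2] : EuclideanSpace ℝ (Fin 4))).toLinearMap
      (η^2/2 - Real.sqrt ((η^2+η+1)*(η^2-η+1))/2 + 1/2) ∧
    1 < η^2/2 + Real.sqrt ((η^2+η+1)*(η^2-η+1))/2 + 1/2 ∧
    η^2/2 - Real.sqrt ((η^2+η+1)*(η^2-η+1))/2 + 1/2 < 1 := by
  have hc : HasFDerivAt (G1 η ∘ G2 η) ((DG (-η)).comp (DG η))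
      (!₂[1/2, 1/2, 1/2, 1/2] : EuclideanSpace ℝ (Fin 4)) := by
    refine HasFDerivAt.comp _ ?_ (hG2 η)
    rw [fix2]
    exact hG1 η
  have hp : (0:ℝ) ≤ (η^2+η+1)*(η^2-η+1) := by
    have : (η^2+η+1)*(η^2-η+1) = η^4 + η^2 + 1 := by ring
    rw [this]; positivity
  have hs := Real.sq_sqrt hp
  have h1 : 1 - η^2 < Real.sqrt ((η^2+η+1)*(η^2-η+1)) := by
    apply Real.lt_sqrt_of_sq_lt
    nlinarith [pow_pos hη 2]
  have h2 : η^2 - 1 < Real.sqrt ((η^2+η+1)*(η^2-η+1)) := by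
    apply Real.lt_sqrt_of_sq_lt
    nlinarith [pow_pos hη 2]
  rw [hc.fderiv]
  refine ⟨by rw [Function.comp_apply, fix2, fix1], hc.differentiableAt, eig _ _ ?_, eig _ _ ?_, ?_, ?_⟩
  · linear_combination hs / 4
  · linear_combination hs / 4
  · linarith
  · linarith
end

section
/- For every η > 0 and every a ∈ [0,1], the point (0, 0, a, a·e^{−3η}/(a·e^{−3η} + (1−a))) ∈ ℝ⁴ is a fixed point of the map G₁∘G₂, i.e. (G₁∘G₂)(0, 0, a, a·e^{−3η}/(a·e^{−3η} + 1 − a)) = (0, 0, a, a·e^{−3η}/(a·e^{−3η} + 1 − a)). -/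
/-- For every `a ∈ [0,1]`, the point `(0, 0, a, a·e^{−3η}/(a·e^{−3η}+1−a))` is a
fixed point of `G₁∘G₂`. -/
theorem omwu_boundary_fixed_point (η : ℝ) (hη : 0 < η) (a : ℝ) (ha : a ∈ Set.Icc (0:ℝ) 1) :
    (G1 η ∘ G2 η)
      (!₂[0, 0, a, a * Real.exp (-(3*η)) / (a * Real.exp (-(3*η)) + 1 - a)] :
        EuclideanSpace ℝ (Fin 4)) =
    !₂[0, 0, a, a * Real.exp (-(3*η)) / (a * Real.exp (-(3*η)) + 1 - a)] := by
  obtain ⟨h0, h1⟩ := ha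
  have hE : 0 < Real.exp (-(3*η)) := Real.exp_pos _
  have hinv : Real.exp (3*η) = (Real.exp (-(3*η)))⁻¹ := by
    rw [Real.exp_neg, inv_inv]
  set E := Real.exp (-(3*η)) with hEdef
  have hD : 0 < a * E + 1 - a := by
    rcases h0.eq_or_lt with h | h
    · rw [← h]; norm_num
    · have := mul_pos h hE
      linarith
  have key : (a * E / (a * E + 1 - a)) * Real.exp (3*η) /
      ((a * E / (a * E + 1 - a)) * Real.exp (3*η) + (1 - a * E / (a * E + 1 - a))) = a := by
    have h2 : (a * E / (a * E + 1 - a)) * Real.exp (3*η) = a / (a * E + 1 - a) := by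
      rw [hinv]; field_simp
    have h3 : a / (a * E + 1 - a) + (1 - a * E / (a * E + 1 - a)) = 1 / (a * E + 1 - a) := by
      field_simp; ring
    rw [h2, h3]
    field_simp
  have hG2 : G2 η (!₂[0, 0, a, a * E / (a * E + 1 - a)] : EuclideanSpace ℝ (Fin 4)) =
      !₂[0, 0, a * E / (a * E + 1 - a), a] := by
    ext i
    fin_cases i
    · simp [G2]
    · simp [G2]
    · simp [G2]
    · simpa [G2] using key
  rw [Function.comp_apply, hG2]
  ext i
  fin_cases i
  · simp [G1]
  · simp [G1]
  · simp [G1]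
  · simp [G1, ← hEdef, add_sub_assoc]
end

section
/- Let η > 0 and a ∈ (0,1), and let P = (0, 0, a, a·e^{−3η}/(a·e^{−3η} + 1 − a)) ∈ ℝ⁴. The map G₁∘G₂ is differentiable at P and its Fréchet derivative J satisfies: (i) J·w = w for the vector w = (0, 0, e^{−3η}·(a + (1−a)·e^{3η})², 1), so 1 is an eigenvalue of J with an eigenvector whose first two coordinates vanish; (ii) the set of eigenvalues of J is {0, 1, μ} where μ = exp(−2η·a·(1−a)·(e^{3η}−1)/(a + (1−a)·e^{3η})); (iii) 0 < μ < 1, so every eigenvalue of J has absolute value at most 1. -/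
lemma aff_hasFDerivAt (f : EuclideanSpace ℝ (Fin 4) → ℝ) (c α β : ℝ) (i j : Fin 4)
    (p : EuclideanSpace ℝ (Fin 4)) (hf : ∀ z, f z = c + (α * z i + β * z j)) :
    HasFDerivAt f (α • (EuclideanSpace.proj i : EuclideanSpace ℝ (Fin 4) →L[ℝ] ℝ)
      + β • (EuclideanSpace.proj j : EuclideanSpace ℝ (Fin 4) →L[ℝ] ℝ)) p := by
  have h := ((α • (EuclideanSpace.proj i : EuclideanSpace ℝ (Fin 4) →L[ℝ] ℝ)
      + β • (EuclideanSpace.proj j : EuclideanSpace ℝ (Fin 4) →L[ℝ] ℝ)).hasFDerivAt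
        (x := p)).const_add c
  refine h.congr_of_eventuallyEq (Filter.Eventually.of_forall fun z => ?_)
  simp [hf]

lemma logistic_hasFDerivAt {E : Type*} [NormedAddCommGroup E] [NormedSpace ℝ E]
    {x s t : E → ℝ} {x' s' t' : E →L[ℝ] ℝ} {p : E}
    (hx : HasFDerivAt x x' p) (hs : HasFDerivAt s s' p) (ht : HasFDerivAt t t' p)
    (hD : x p * Real.exp (s p) + (1 - x p) * Real.exp (t p) ≠ 0) :
    ∃ L : E →L[ℝ] ℝ, HasFDerivAt (fun z => x z * Real.exp (s z) /
      (x z * Real.exp (s z) + (1 - x z) * Real.exp (t z))) L p ∧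
      ∀ v, L v = Real.exp (s p) * Real.exp (t p) /
        (x p * Real.exp (s p) + (1 - x p) * Real.exp (t p))^2 *
        (x' v + x p * (1 - x p) * (s' v - t' v)) := by
  have hn := hx.mul hs.exp
  have hd := hn.add ((hx.const_sub 1).mul ht.exp)
  have hi := (hasDerivAt_inv hD).comp_hasFDerivAt p hd
  refine ⟨_, (hn.mul hi).congr_of_eventuallyEq
    (Filter.Eventually.of_forall fun z => by simp [div_eq_mul_inv]), fun v => ?_⟩
  simp
  field_simp
  ring

lemma G1_hasFDerivAt (η c d : ℝ) (hD : d * Real.exp (-(3*η)) + 1 - d ≠ 0) :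
    ∃ L : EuclideanSpace ℝ (Fin 4) →L[ℝ] EuclideanSpace ℝ (Fin 4),
      HasFDerivAt (G1 η) L (!₂[0, 0, c, d] : EuclideanSpace ℝ (Fin 4)) ∧
      ∀ v, L v 0 = v 1 ∧ L v 1 = Real.exp (3*η - 4*η*d - 2*η*c) * v 1 ∧ L v 2 = v 3 ∧
        L v 3 = Real.exp (-(3*η)) / (d * Real.exp (-(3*η)) + 1 - d)^2 *
          (v 3 + d * (1 - d) * (4*η * v 1 + 2*η*v 0)) := by
  set p := (!₂[0, 0, c, d] : EuclideanSpace ℝ (Fin 4)) with hp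
  have p0 : p 0 = 0 := by simp [hp]
  have p1 : p 1 = 0 := by simp [hp]
  have p2 : p 2 = c := by simp [hp]
  have p3 : p 3 = d := by simp [hp]
  have hc (i : Fin 4) : HasFDerivAt (fun z : EuclideanSpace ℝ (Fin 4) => z i)
      (EuclideanSpace.proj i : EuclideanSpace ℝ (Fin 4) →L[ℝ] ℝ) p :=
    (EuclideanSpace.proj i : EuclideanSpace ℝ (Fin 4) →L[ℝ] ℝ).hasFDerivAt
  obtain ⟨A, hA, hA'⟩ := logistic_hasFDerivAt (hc 1)
    (aff_hasFDerivAt (fun z => 3*η - 2*η * z 3 - η * z 2) (3*η) (-(2*η)) (-η) 3 2 p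
      (fun z => by ring))
    (aff_hasFDerivAt (fun z => 2*η * z 3 + η * z 2) 0 (2*η) η 3 2 p
      (fun z => by ring)) (by simp [p1])
  obtain ⟨B, hB, hB'⟩ := logistic_hasFDerivAt (hc 3)
    (aff_hasFDerivAt (fun z => -(3*η) + 2*η * z 1 + η * z 0) (-(3*η)) (2*η) η 1 0 p
      (fun z => by ring))
    (aff_hasFDerivAt (fun z => -(2*η * z 1) - η * z 0) 0 (-(2*η)) (-η) 1 0 p
      (fun z => by ring)) (by
        simp only [p0, p1, p3]; simp; intro h; apply hD; linarith)
  have key : HasFDerivAt (G1 η)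
      ((PiLp.continuousLinearEquiv 2 ℝ (fun _ : Fin 4 => ℝ)).symm.toContinuousLinearMap.comp
        (ContinuousLinearMap.pi ![(EuclideanSpace.proj 1 : EuclideanSpace ℝ (Fin 4) →L[ℝ] ℝ),
          A, (EuclideanSpace.proj 3 : EuclideanSpace ℝ (Fin 4) →L[ℝ] ℝ), B])) p := by
    rw [← hasFDerivWithinAt_univ, hasFDerivWithinAt_euclidean]
    intro i
    fin_cases i
    · exact (hc 1).hasFDerivWithinAt
    · exact (hA).hasFDerivWithinAt
    · exact (hc 3).hasFDerivWithinAt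
    · exact (hB).hasFDerivWithinAt
  refine ⟨_, key, fun v => ⟨rfl, ?_, rfl, ?_⟩⟩
  · change A v = _
    rw [hA']
    simp only [p1, p2, p3]
    rw [show 3*η - 4*η*d - 2*η*c = (3*η - 2*η*d - η*c) - (2*η*d+η*c) by ring, Real.exp_sub _ (2*η*d+η*c)]
    simp
    field_simp
    simp
  · change B v = _
    rw [hB']
    simp only [p0, p1, p3]
    simp
    rw [add_sub_assoc]
    ring

lemma G2_eq (η : ℝ) : G2 η = G1 (-η) := by
  funext z
  unfold G1 G2
  congr! 6 <;> ring_nf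

lemma comp_hasFDerivAt (η : ℝ) (hη : 0 < η) (a : ℝ) (ha : a ∈ Set.Ioo (0:ℝ) 1) :
    ∃ (J : EuclideanSpace ℝ (Fin 4) →L[ℝ] EuclideanSpace ℝ (Fin 4)) (m α β q r : ℝ),
      HasFDerivAt (G1 η ∘ G2 η) J
        (!₂[0, 0, a, a * Real.exp (-(3*η)) / (a * Real.exp (-(3*η)) + 1 - a)] :
        EuclideanSpace ℝ (Fin 4)) ∧
      ∀ v, J v 0 = m * v 1 ∧
        J v 1 = Real.exp (-(2*η*a*(1-a)*(Real.exp (3*η) - 1) / (a + (1-a)*Real.exp (3*η)))) * v 1 ∧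
        J v 2 = α * v 0 + β * v 1 + Real.exp (-(3*η)) * (a + (1-a) * Real.exp (3*η))^2 * v 3 ∧
        J v 3 = q * v 0 + r * v 1 + v 3 := by
  obtain ⟨ha0, ha1⟩ := ha
  have hE : 0 < Real.exp (3*η) := Real.exp_pos _
  have hneg : Real.exp (-(3*η)) = (Real.exp (3*η))⁻¹ := Real.exp_neg _
  have hpos : Real.exp (-(3*(-η))) = Real.exp (3*η) := by ring_nf
  have h1a : 0 < 1 - a := by linarith
  have hS : 0 < a + (1-a) * Real.exp (3*η) := by positivity
  set b := a * Real.exp (-(3*η)) / (a * Real.exp (-(3*η)) + 1 - a) with hb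
  have hD1 : a * Real.exp (-(3*η)) + 1 - a = (a + (1-a) * Real.exp (3*η)) / Real.exp (3*η) := by
    rw [hneg]; field_simp; ring
  have hb' : b = a / (a + (1-a) * Real.exp (3*η)) := by
    rw [hb, hD1, hneg]; field_simp
  have hD2 : b * Real.exp (-(3*(-η))) + 1 - b
      = Real.exp (3*η) / (a + (1-a) * Real.exp (3*η)) := by
    rw [hb', hpos]; field_simp; ring
  obtain ⟨L1, h1, h1'⟩ := G1_hasFDerivAt η b a (by rw [hD1]; positivity)
  obtain ⟨L2, h2, h2'⟩ := G1_hasFDerivAt (-η) a b (by rw [hD2]; positivity)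
  have hG : G1 (-η) (!₂[0, 0, a, b] : EuclideanSpace ℝ (Fin 4)) = !₂[0, 0, b, a] := by
    have hf : b * Real.exp (-(3*(-η))) / (b * Real.exp (-(3*(-η))) + (1 - b)) = a := by
      rw [← add_sub_assoc, hD2, hb', hpos]; field_simp
    ext i
    fin_cases i
    · simp [G1]
    · simp [G1]
    · simp [G1]
    · simpa [G1] using hf
  rw [← hG] at h1
  have hJ := h1.comp _ h2
  rw [← G2_eq] at hJ
  refine ⟨_, Real.exp (3*(-η) - 4*(-η)*b - 2*(-η)*a),
    (Real.exp (3*η))⁻¹ * (a + (1-a) * Real.exp (3*η))^2 * (b * (1-b)) * (2 * (-η)),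
    (Real.exp (3*η))⁻¹ * (a + (1-a) * Real.exp (3*η))^2 * (b * (1-b)) * (4 * (-η)),
    b * (1-b) * (2 * (-η)),
    b * (1-b) * (4 * (-η)) + Real.exp (3*η) / (a + (1-a) * Real.exp (3*η))^2 * (a*(1-a))
      * (4*η*Real.exp (3*(-η) - 4*(-η)*b - 2*(-η)*a) + 2*η), hJ, fun v => ?_⟩
  obtain ⟨u0, u1, u2, u3⟩ := h2' v
  obtain ⟨w0, w1, w2, w3⟩ := h1' (L2 v)
  rw [hD2, hpos] at u3
  rw [hD1, hneg] at w3
  simp only [ContinuousLinearMap.comp_apply]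
  refine ⟨by rw [w0, u1], ?_, ?_, ?_⟩
  · rw [w1, u1, ← mul_assoc, ← Real.exp_add]
    congr 2
    rw [hb']; field_simp; ring
  · rw [w2, u3, hneg]
    generalize Real.exp (3*η) = E at *
    field_simp
    ring
  · rw [w3, u3, u0, u1]
    generalize Real.exp (3*η) = E at *
    generalize Real.exp (3*(-η) - 4*(-η)*b - 2*(-η)*a) = m at *
    field_simp
    ring

/-- Spectral properties of the Jacobian of `G₁∘G₂` at the boundary fixed point
`P = (0,0,a, a·e^{−3η}/(a·e^{−3η}+1−a))` for `a ∈ (0,1)`: it fixes the vector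
`w = (0,0, e^{−3η}(a+(1−a)e^{3η})², 1)`, its eigenvalues are exactly `{0, 1, μ}`
with `μ = exp(−2ηa(1−a)(e^{3η}−1)/(a+(1−a)e^{3η}))`, `0 < μ < 1`, and every
eigenvalue has absolute value at most `1`. -/
theorem omwu_boundary_jacobian_spectrum (η : ℝ) (hη : 0 < η) (a : ℝ)
    (ha : a ∈ Set.Ioo (0:ℝ) 1) :
    DifferentiableAt ℝ (G1 η ∘ G2 η)
      (!₂[0, 0, a, a * Real.exp (-(3*η)) / (a * Real.exp (-(3*η)) + 1 - a)] :
        EuclideanSpace ℝ (Fin 4)) ∧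
    fderiv ℝ (G1 η ∘ G2 η)
      (!₂[0, 0, a, a * Real.exp (-(3*η)) / (a * Real.exp (-(3*η)) + 1 - a)] :
        EuclideanSpace ℝ (Fin 4))
      (!₂[0, 0, Real.exp (-(3*η)) * (a + (1-a) * Real.exp (3*η))^2, 1] :
        EuclideanSpace ℝ (Fin 4)) =
      (!₂[0, 0, Real.exp (-(3*η)) * (a + (1-a) * Real.exp (3*η))^2, 1] :
        EuclideanSpace ℝ (Fin 4)) ∧
    (∀ x : ℝ,
      Module.End.HasEigenvalue
        (fderiv ℝ (G1 η ∘ G2 η)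
          (!₂[0, 0, a, a * Real.exp (-(3*η)) / (a * Real.exp (-(3*η)) + 1 - a)] :
            EuclideanSpace ℝ (Fin 4))).toLinearMap x ↔
      x ∈ ({0, 1,
        Real.exp (-(2*η*a*(1-a)*(Real.exp (3*η) - 1) / (a + (1-a)*Real.exp (3*η))))} :
          Set ℝ)) ∧
    (0 < Real.exp (-(2*η*a*(1-a)*(Real.exp (3*η) - 1) / (a + (1-a)*Real.exp (3*η)))) ∧
      Real.exp (-(2*η*a*(1-a)*(Real.exp (3*η) - 1) / (a + (1-a)*Real.exp (3*η)))) < 1) ∧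
    (∀ x : ℝ,
      Module.End.HasEigenvalue
        (fderiv ℝ (G1 η ∘ G2 η)
          (!₂[0, 0, a, a * Real.exp (-(3*η)) / (a * Real.exp (-(3*η)) + 1 - a)] :
            EuclideanSpace ℝ (Fin 4))).toLinearMap x → |x| ≤ 1) := by
  obtain ⟨J, m, α, β, q, r, hJ, hv⟩ := comp_hasFDerivAt η hη a ha
  rw [hJ.fderiv]
  obtain ⟨ha0, ha1⟩ := ha
  have h1a : 0 < 1 - a := by linarith
  have hE1 : 1 < Real.exp (3*η) := Real.one_lt_exp_iff.mpr (by linarith)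
  have hμ0 := Real.exp_pos
    (-(2*η*a*(1-a)*(Real.exp (3*η) - 1) / (a + (1-a)*Real.exp (3*η))))
  have hμ1 : Real.exp (-(2*η*a*(1-a)*(Real.exp (3*η) - 1) / (a + (1-a)*Real.exp (3*η)))) < 1 := by
    rw [Real.exp_lt_one_iff, neg_lt_zero]
    have : 0 < Real.exp (3*η) - 1 := by linarith
    positivity
  generalize Real.exp (-(2*η*a*(1-a)*(Real.exp (3*η) - 1) / (a + (1-a)*Real.exp (3*η)))) = μ at *
  generalize Real.exp (-(3*η)) * (a + (1-a) * Real.exp (3*η))^2 = γ at *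
  have hw : J (!₂[0, 0, γ, 1] : EuclideanSpace ℝ (Fin 4)) = !₂[0, 0, γ, 1] := by
    obtain ⟨e0, e1, e2, e3⟩ := hv (!₂[0, 0, γ, 1] : EuclideanSpace ℝ (Fin 4))
    ext i
    fin_cases i
    · simpa using e0
    · simpa using e1
    · simpa using e2
    · simpa using e3
  have hfwd : ∀ x : ℝ, Module.End.HasEigenvalue J.toLinearMap x → x = 0 ∨ x = 1 ∨ x = μ := by
    intro x hx
    obtain ⟨v, hv1⟩ := hx.exists_hasEigenvector
    have hne := hv1.2
    have hJv : J v = x • v := hv1.apply_eq_smul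
    obtain ⟨e0, e1, e2, e3⟩ := hv v
    rw [hJv] at e0 e1 e2 e3
    simp only [PiLp.smul_apply, smul_eq_mul] at e0 e1 e2 e3
    by_contra! hcon
    obtain ⟨hx0, hx1, hxμ⟩ := hcon
    have v1 : v 1 = 0 := by
      have : (x - μ) * v 1 = 0 := by linarith
      exact (mul_eq_zero.mp this).resolve_left (sub_ne_zero.mpr hxμ)
    have v0 : v 0 = 0 := by
      rw [v1, mul_zero] at e0
      exact (mul_eq_zero.mp e0).resolve_left hx0
    have v3 : v 3 = 0 := by
      rw [v1, v0] at e3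
      have : (x - 1) * v 3 = 0 := by linarith
      exact (mul_eq_zero.mp this).resolve_left (sub_ne_zero.mpr hx1)
    have v2 : v 2 = 0 := by
      rw [v1, v0, v3] at e2
      have : x * v 2 = 0 := by linarith
      exact (mul_eq_zero.mp this).resolve_left hx0
    apply hne
    ext i
    fin_cases i
    · exact v0
    · exact v1
    · exact v2
    · exact v3
  have hmk : ∀ (x : ℝ) (v : EuclideanSpace ℝ (Fin 4)), v ≠ 0 → J v = x • v →
      Module.End.HasEigenvalue J.toLinearMap x := fun x v h0 h =>
    Module.End.hasEigenvalue_of_hasEigenvector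
      (Module.End.hasEigenvector_iff.mpr ⟨Module.End.mem_eigenspace_iff.mpr h, h0⟩)
  refine ⟨hJ.differentiableAt, hw, fun x => ⟨fun hx => by simpa using hfwd x hx, ?_⟩,
    ⟨hμ0, hμ1⟩, ?_⟩
  · rintro (rfl | rfl | hx)
    · refine hmk 0 (!₂[0, 0, 1, 0] : EuclideanSpace ℝ (Fin 4)) (fun h => ?_) ?_
      · simpa using congrArg (fun z : EuclideanSpace ℝ (Fin 4) => z 2) h
      · obtain ⟨e0, e1, e2, e3⟩ := hv (!₂[0, 0, 1, 0] : EuclideanSpace ℝ (Fin 4))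
        ext i
        fin_cases i
        · simpa using e0
        · simpa using e1
        · simpa using e2
        · simpa using e3
    · refine hmk 1 (!₂[0, 0, γ, 1] : EuclideanSpace ℝ (Fin 4)) (fun h => ?_) (by rw [hw, one_smul])
      simpa using congrArg (fun z : EuclideanSpace ℝ (Fin 4) => z 3) h
    · have hx' : x = μ := hx
      subst hx'
      obtain ⟨d, hd⟩ : ∃ d, d * (x - 1) = q * m + r * x :=
        ⟨(q * m + r * x) / (x - 1), div_mul_cancel₀ _ (by linarith)⟩
      obtain ⟨c, hc⟩ : ∃ c, c * x = α * m + β * x + γ * d :=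
        ⟨(α * m + β * x + γ * d) / x, div_mul_cancel₀ _ hμ0.ne'⟩
      refine hmk x (!₂[m, x, c, d] : EuclideanSpace ℝ (Fin 4)) (fun h => ?_) ?_
      · have : x = 0 := by simpa using congrArg (fun z : EuclideanSpace ℝ (Fin 4) => z 1) h
        exact hμ0.ne' this
      · obtain ⟨e0, e1, e2, e3⟩ := hv (!₂[m, x, c, d] : EuclideanSpace ℝ (Fin 4))
        simp at e0 e1 e2 e3
        ext i
        fin_cases i
        · simp; linarith
        · simp; linarith
        · simp; linarith
        · simp; linarith
  · intro x hx
    rcases hfwd x hx with rfl | rfl | rfl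
    · simp
    · simp
    · rw [abs_of_pos hμ0]; exact hμ1.le
end

section
/- Let η > 0 and a ∈ (0,1), and let P = (0, 0, a, a·e^{−3η}/(a·e^{−3η} + 1 − a)) ∈ ℝ⁴. There exists ε > 0 such that for every v ∈ [0,1]⁴ with ‖v − P‖ < ε, the first two coordinates of the iterates (G₁∘G₂)ⁿ(v) converge to 0 as n → ∞. -/
/-- Inverse odds map. -/
noncomputable def sg (u : ℝ) : ℝ := u / (1 + u)

lemma sg_nonneg {u : ℝ} (hu : 0 ≤ u) : 0 ≤ sg u := by unfold sg; positivity

lemma sg_le_one {u : ℝ} (hu : 0 ≤ u) : sg u ≤ 1 := by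
  unfold sg; rw [div_le_one (by positivity)]; linarith

lemma sg_le_self {u : ℝ} (hu : 0 ≤ u) : sg u ≤ u := by
  unfold sg; rw [div_le_iff₀ (by positivity)]; nlinarith [mul_nonneg hu hu]

lemma sg_upd {u : ℝ} (hu : 0 ≤ u) (A B : ℝ) :
    sg u * Real.exp A / (sg u * Real.exp A + (1 - sg u) * Real.exp B)
      = sg (u * Real.exp (A - B)) := by
  unfold sg
  rw [Real.exp_sub]
  have h1 : (0:ℝ) < 1 + u := by linarith
  have h2 := Real.exp_pos A
  have h3 := Real.exp_pos B
  have h4 : 1 - u / (1 + u) = 1 / (1 + u) := by field_simp; ring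
  rw [h4]
  have h5 : 0 < u * Real.exp A + Real.exp B := by positivity
  have h6 : u / (1 + u) * Real.exp A + 1 / (1 + u) * Real.exp B
      = (u * Real.exp A + Real.exp B) / (1 + u) := by field_simp
  have h7 : 1 + u * (Real.exp A / Real.exp B)
      = (u * Real.exp A + Real.exp B) / Real.exp B := by field_simp; ring
  rw [h6, h7]
  field_simp

lemma sg_upd' (Y A B : ℝ) :
    sg (Real.exp Y) * Real.exp A / (sg (Real.exp Y) * Real.exp A + (1 - sg (Real.exp Y)) * Real.exp B)
      = sg (Real.exp (Y + (A - B))) := by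
  rw [sg_upd (Real.exp_pos Y).le, ← Real.exp_add]

lemma sg_inv {x : ℝ} (hx : x < 1) : sg (x / (1 - x)) = x := by
  unfold sg
  have : 0 < 1 - x := by linarith
  have h : 1 + x / (1 - x) = 1 / (1 - x) := by field_simp; ring
  rw [h]; field_simp

/-- One step of `G1 ∘ G2` in odds coordinates. -/
lemma step_coords (η : ℝ) (z : EuclideanSpace ℝ (Fin 4)) (u Y : ℝ) (hu : 0 ≤ u)
    (h1 : z 1 = sg u) (h3 : z 3 = sg (Real.exp Y)) :
    ∃ x' y' : ℝ, x' = sg (u * Real.exp (η * (-3 + 4 * z 3 + 2 * z 2))) ∧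
      y' = sg (Real.exp (Y + η * (3 - 4 * z 1 - 2 * z 0))) ∧
      (G1 η ∘ G2 η) z 0 = x' ∧ (G1 η ∘ G2 η) z 2 = y' ∧
      (G1 η ∘ G2 η) z 1 = sg (u * Real.exp (η * (2 * z 3 + 2 * z 2 - 4 * y'))) ∧
      (G1 η ∘ G2 η) z 3 = sg (Real.exp (Y + η * (4 * x' - 2 * z 1 - 2 * z 0))) := by
  have g0 : G2 η z 0 = z 1 := rfl
  have g2 : G2 η z 2 = z 3 := rfl
  have g1 : G2 η z 1 = sg (u * Real.exp (η * (-3 + 4 * z 3 + 2 * z 2))) := by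
    have : G2 η z 1 = z 1 * Real.exp (-(3*η) + 2*η * z 3 + η * z 2) /
      (z 1 * Real.exp (-(3*η) + 2*η * z 3 + η * z 2)
        + (1 - z 1) * Real.exp (-(2*η * z 3) - η * z 2)) := rfl
    rw [this, h1, sg_upd hu]; congr 3; ring
  have g3 : G2 η z 3 = sg (Real.exp (Y + η * (3 - 4 * z 1 - 2 * z 0))) := by
    have : G2 η z 3 = z 3 * Real.exp (3*η - 2*η * z 1 - η * z 0) /
      (z 3 * Real.exp (3*η - 2*η * z 1 - η * z 0)
        + (1 - z 3) * Real.exp (2*η * z 1 + η * z 0)) := rfl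
    rw [this, h3, sg_upd']; congr 3; ring
  refine ⟨G2 η z 1, G2 η z 3, g1, g3, rfl, rfl, ?_, ?_⟩
  · have : (G1 η ∘ G2 η) z 1 =
      G2 η z 1 * Real.exp (3*η - 2*η * G2 η z 3 - η * G2 η z 2) /
      (G2 η z 1 * Real.exp (3*η - 2*η * G2 η z 3 - η * G2 η z 2)
        + (1 - G2 η z 1) * Real.exp (2*η * G2 η z 3 + η * G2 η z 2)) := rfl
    rw [this, g2]
    generalize G2 η z 3 = y' at *
    rw [g1, sg_upd (by positivity), mul_assoc, ← Real.exp_add]; congr 3; ring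
  · have : (G1 η ∘ G2 η) z 3 =
      G2 η z 3 * Real.exp (-(3*η) + 2*η * G2 η z 1 + η * G2 η z 0) /
      (G2 η z 3 * Real.exp (-(3*η) + 2*η * G2 η z 1 + η * G2 η z 0)
        + (1 - G2 η z 3) * Real.exp (-(2*η * G2 η z 1) - η * G2 η z 0)) := rfl
    rw [this, g0]
    generalize G2 η z 1 = x' at *
    rw [g3, sg_upd']; congr 2; ring

lemma continuous_sg_exp : Continuous (fun Y : ℝ => sg (Real.exp Y)) := by
  unfold sg
  refine Continuous.div (by fun_prop) (by fun_prop) (fun Y => ?_)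
  have := Real.exp_pos Y
  linarith

/-- The uniform neighbourhood on which the drift is negative. -/
lemma exists_radius (η Y0 a δ : ℝ) (hδ : 0 < δ) (h1 : sg (Real.exp Y0) = a - δ)
    (h2 : sg (Real.exp (Y0 + 3 * η)) = a) :
    ∃ ρ > 0, ∃ r > 0, ∀ Y q x p : ℝ, |Y - Y0| < r → |q - a| < ρ → |x| < r → |p| < r →
      2 * sg (Real.exp Y) + 2 * q - 4 * sg (Real.exp (Y + η * (3 - 4 * x - 2 * p))) < -δ ∧
      |sg (Real.exp (Y + η * (3 - 4 * x - 2 * p))) - a| < ρ := by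
  have hc := continuous_sg_exp
  have hH : Continuous (fun t : ℝ × ℝ × ℝ =>
      sg (Real.exp (t.1 + η * (3 - 4 * t.2.1 - 2 * t.2.2)))) :=
    hc.comp (g := fun Y : ℝ => sg (Real.exp Y)) (by fun_prop)
  have hY : Continuous (fun t : ℝ × ℝ × ℝ => sg (Real.exp t.1)) :=
    hc.comp (g := fun Y : ℝ => sg (Real.exp Y)) (by fun_prop)
  set ρ := δ / 8 with hρ
  have hρ0 : 0 < ρ := by positivity
  have e1 : ∀ᶠ t : ℝ × ℝ × ℝ in nhds (Y0, 0, 0),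
      |sg (Real.exp (t.1 + η * (3 - 4 * t.2.1 - 2 * t.2.2))) - a| < ρ := by
    have := (hH.sub (continuous_const (y := a))).abs.continuousAt (x := (Y0, 0, 0))
    refine this.eventually_lt_const ?_ 
    have h2' : sg (Real.exp (Y0 + η * 3)) = a := by rw [← h2]; congr 3; ring
    simpa [h2'] using hρ0
  have e2 : ∀ᶠ t : ℝ × ℝ × ℝ in nhds (Y0, 0, 0), |sg (Real.exp t.1) - (a - δ)| < ρ := by
    have := (hY.sub (continuous_const (y := a - δ))).abs.continuousAt (x := (Y0, 0, 0))
    refine this.eventually_lt_const ?_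
    simpa [h1] using hρ0
  obtain ⟨r, hr, H⟩ := Metric.eventually_nhds_iff.1 (e1.and e2)
  refine ⟨ρ, hρ0, r, hr, fun Y q x p a1 a2 a3 a4 => ?_⟩
  have := @H (Y, x, p) (by
    simp only [Prod.dist_eq, Real.dist_eq, sub_zero, max_lt_iff]; exact ⟨a1, a3, a4⟩)
  obtain ⟨b1, b2⟩ := this
  refine ⟨?_, b1⟩
  simp only at b1 b2
  rw [abs_lt] at a2 b1 b2
  linarith [a2.1, a2.2, b1.1, b1.2, b2.1, b2.2]

/-- The invariant region. -/
def OmwuInv (a ρ r K L Y0 : ℝ) (z : EuclideanSpace ℝ (Fin 4)) (u : ℝ) : Prop :=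
  ∃ Y : ℝ, 0 ≤ u ∧ z 1 = sg u ∧ z 3 = sg (Real.exp Y) ∧ 0 ≤ z 0 ∧ z 2 ≤ 1 ∧
    |z 2 - a| < ρ ∧ |Y - Y0| + K * u + L * z 0 < r

lemma inv_step (η a δ ρ r K L C κ Y0 : ℝ) (hη : 0 < η) (hC : C = Real.exp (3 * η))
    (hκ : κ = Real.exp (-(η * δ))) (hL : L = 2 * η + 1) (hK1 : 1 ≤ K)
    (hK : η * (4 * C + 2) + L * C + K * κ ≤ K)
    (H : ∀ Y q x p : ℝ, |Y - Y0| < r → |q - a| < ρ → |x| < r → |p| < r →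
      2 * sg (Real.exp Y) + 2 * q - 4 * sg (Real.exp (Y + η * (3 - 4 * x - 2 * p))) < -δ ∧
      |sg (Real.exp (Y + η * (3 - 4 * x - 2 * p))) - a| < ρ)
    (z : EuclideanSpace ℝ (Fin 4)) (u : ℝ) (hI : OmwuInv a ρ r K L Y0 z u) :
    ∃ u', OmwuInv a ρ r K L Y0 ((G1 η ∘ G2 η) z) u' ∧ u' ≤ κ * u ∧
      (G1 η ∘ G2 η) z 0 ≤ C * u := by
  obtain ⟨Y, hu, h1, h3, h0, h2, hq, hV⟩ := hI
  obtain ⟨x', y', hx', hy', g0, g2, g1, g3⟩ := step_coords η z u Y hu h1 h3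
  have hz1 : 0 ≤ z 1 := h1 ▸ sg_nonneg hu
  have hz1u : z 1 ≤ u := h1 ▸ sg_le_self hu
  have hz3 : z 3 ≤ 1 := h3 ▸ sg_le_one (Real.exp_pos Y).le
  have hKu : u ≤ K * u := le_mul_of_one_le_left hu hK1
  have hLp : z 0 ≤ L * z 0 := le_mul_of_one_le_left h0 (by linarith)
  have hab := abs_nonneg (Y - Y0)
  obtain ⟨d1, d2⟩ := H Y (z 2) (z 1) (z 0) (by linarith) hq
    (by rw [abs_of_nonneg hz1]; linarith) (by rw [abs_of_nonneg h0]; linarith)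
  rw [← hy'] at d1 d2
  rw [← h3] at d1
  have hx0 : 0 ≤ x' := hx' ▸ sg_nonneg (by positivity)
  have hxC : x' ≤ C * u := by
    rw [hx']
    refine (sg_le_self (by positivity)).trans ?_
    rw [mul_comm C, hC]
    refine mul_le_mul_of_nonneg_left (Real.exp_le_exp.2 ?_) hu
    nlinarith
  have hu' : u * Real.exp (η * (2 * z 3 + 2 * z 2 - 4 * y')) ≤ κ * u := by
    rw [mul_comm κ, hκ]
    refine mul_le_mul_of_nonneg_left (Real.exp_le_exp.2 ?_) hu
    nlinarith
  refine ⟨_, ⟨_, by positivity, g1, g3, by rw [g0]; exact hx0, ?_, by rw [g2]; exact d2, ?_⟩,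
    hu', by rw [g0]; exact hxC⟩
  · rw [g2, hy']; exact sg_le_one (Real.exp_pos _).le
  · rw [g0]
    generalize u * Real.exp (η * (2 * z 3 + 2 * z 2 - 4 * y')) = u' at *
    have t1 : |Y + η * (4 * x' - 2 * z 1 - 2 * z 0) - Y0|
        ≤ |Y - Y0| + η * (4 * x' + 2 * z 1 + 2 * z 0) := by
      have : Y + η * (4 * x' - 2 * z 1 - 2 * z 0) - Y0
        = (Y - Y0) + η * (4 * x' - 2 * z 1 - 2 * z 0) := by ring
      rw [this]
      refine (abs_add_le _ _).trans ?_
      rw [abs_mul, abs_of_pos hη]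
      have : |4 * x' - 2 * z 1 - 2 * z 0| ≤ 4 * x' + 2 * z 1 + 2 * z 0 := by
        rw [abs_le]; constructor <;> linarith
      have := mul_le_mul_of_nonneg_left this hη.le
      linarith
    have t2 : η * (4 * x' + 2 * z 1 + 2 * z 0) ≤ η * (4 * (C * u) + 2 * u + 2 * z 0) :=
      mul_le_mul_of_nonneg_left (by linarith) hη.le
    have t3 : K * u' ≤ K * (κ * u) := mul_le_mul_of_nonneg_left hu' (by linarith)
    have t4 : L * x' ≤ L * (C * u) := mul_le_mul_of_nonneg_left hxC (by linarith)
    have t5 := mul_le_mul_of_nonneg_right hK hu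
    have t6 : 2 * η * z 0 ≤ L * z 0 := mul_le_mul_of_nonneg_right (by linarith) h0
    nlinarith

/-- Near the boundary fixed point `P = (0,0,a, a·e^{−3η}/(a·e^{−3η}+1−a))`, the first
two coordinates of the iterates of `G₁∘G₂` starting from any point of `[0,1]⁴`
converge to `0`. -/
theorem omwu_first_two_coords_tend_to_zero (η : ℝ) (hη : 0 < η) (a : ℝ)
    (ha : a ∈ Set.Ioo (0:ℝ) 1)
    (P : EuclideanSpace ℝ (Fin 4))
    (hP : P = ![0, 0, a, a * Real.exp (-(3*η)) / (a * Real.exp (-(3*η)) + 1 - a)]) :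
    ∃ ε > 0, ∀ v : EuclideanSpace ℝ (Fin 4),
      (∀ i, v i ∈ Set.Icc (0:ℝ) 1) →
      ‖v - P‖ < ε →
      Filter.Tendsto (fun n : ℕ => ((G1 η ∘ G2 η)^[n] v) 0) Filter.atTop (nhds 0) ∧
      Filter.Tendsto (fun n : ℕ => ((G1 η ∘ G2 η)^[n] v) 1) Filter.atTop (nhds 0) := by
  have hPi : ∀ i, P i = ![0, 0, a, a * Real.exp (-(3*η)) / (a * Real.exp (-(3*η)) + 1 - a)] i :=
    fun i => congrFun hP i
  obtain ⟨ha0, ha1⟩ := ha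
  have h1a : 0 < 1 - a := by linarith
  set E := Real.exp (-(3*η)) with hE
  have hE0 : 0 < E := Real.exp_pos _
  have hE1 : E < 1 := by rw [hE, Real.exp_lt_one_iff]; linarith
  have hD : 0 < a * E + 1 - a := by have := mul_pos ha0 hE0; linarith
  set b := a * E / (a * E + 1 - a) with hb
  have P0 : P 0 = 0 := hPi 0
  have P1 : P 1 = 0 := hPi 1
  have P2 : P 2 = a := hPi 2
  have P3 : P 3 = b := hPi 3
  have hb0 : 0 < b := by positivity
  have hb1 : b < 1 := by rw [hb, div_lt_one hD]; linarith
  have hbo : b / (1 - b) = a / (1 - a) * E := by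
    have : 1 - b = (1 - a) / (a * E + 1 - a) := by rw [hb]; field_simp; ring
    rw [this, hb]; field_simp
  set Y0 := Real.log (b / (1 - b)) with hY0
  have hbpos : 0 < b / (1 - b) := div_pos hb0 (by linarith)
  have eY0 : Real.exp Y0 = b / (1 - b) := Real.exp_log hbpos
  set δ := a - b with hδ
  have hδ0 : 0 < δ := by
    have : b < a := by
      rw [hb, div_lt_iff₀ hD]
      have : 0 < a * ((1 - a) * (1 - E)) := by
        have : 0 < 1 - E := by linarith
        positivity
      nlinarith
    linarith
  obtain ⟨ρ, hρ, r, hr, H⟩ := exists_radius η Y0 a δ hδ0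
    (by rw [eY0, sg_inv hb1]; ring)
    (by
      rw [Real.exp_add, eY0, hbo, mul_assoc, hE, ← Real.exp_add]
      simp [sg_inv ha1])
  set C := Real.exp (3 * η) with hC
  set κ := Real.exp (-(η * δ)) with hκ
  have hκ1 : κ < 1 := by
    rw [hκ, Real.exp_lt_one_iff]; have := mul_pos hη hδ0; linarith
  have hκ0 : 0 < κ := Real.exp_pos _
  have hC0 : 0 < C := Real.exp_pos _
  set L := 2 * η + 1 with hL
  have hL0 : 0 < L := by positivity
  have hk : 0 < 1 - κ := by linarith
  set K := (η * (4 * C + 2) + L * C) / (1 - κ) + 1 with hK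
  have hKge : 1 ≤ K := by
    have : 0 ≤ (η * (4 * C + 2) + L * C) / (1 - κ) := by positivity
    linarith
  have hKK : η * (4 * C + 2) + L * C + K * κ ≤ K := by
    have : K * (1 - κ) = (η * (4 * C + 2) + L * C) + (1 - κ) := by
      rw [hK]; field_simp
    linarith
  have step := inv_step η a δ ρ r K L C κ Y0 hη hC hκ hL hKge hKK H
  -- initial condition
  have c : ∀ i : Fin 4, Continuous (fun v : EuclideanSpace ℝ (Fin 4) => v i) := fun i => by fun_prop
  have ev : ∀ᶠ v : EuclideanSpace ℝ (Fin 4) in nhds P,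
      (v 1 < 1 ∧ 0 < v 3 ∧ v 3 < 1) ∧ |v 2 - a| < ρ ∧
      |Real.log (v 3 / (1 - v 3)) - Y0| + K * (v 1 / (1 - v 1)) + L * v 0 < r := by
    refine ((((c 1).continuousAt.eventually_lt_const ?_)).and
      (((c 3).continuousAt.eventually_const_lt ?_).and
      ((c 3).continuousAt.eventually_lt_const ?_))).and
      ((((c 2).sub continuous_const).abs.continuousAt.eventually_lt_const ?_).and ?_)
    · simp only [P1]; norm_num
    · simp only [P3]; exact hb0
    · simp only [P3]; exact hb1
    · simpa [P2] using hρ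
    · have : ContinuousAt (fun v : EuclideanSpace ℝ (Fin 4) =>
          |Real.log (v 3 / (1 - v 3)) - Y0| + K * (v 1 / (1 - v 1)) + L * v 0) P := by
        have k1 : ContinuousAt (fun v : EuclideanSpace ℝ (Fin 4) => v 3 / (1 - v 3)) P :=
          (c 3).continuousAt.div (continuous_const.sub (c 3)).continuousAt (by
            simp only [P3]; linarith)
        have k2 : ContinuousAt (fun v : EuclideanSpace ℝ (Fin 4) => v 1 / (1 - v 1)) P :=
          (c 1).continuousAt.div (continuous_const.sub (c 1)).continuousAt (by
            simp [P1])
        have k3 := k1.log (by simp only [P3]; exact hbpos.ne')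
        exact (((k3.sub continuousAt_const).abs).add (continuousAt_const.mul k2)).add
          (continuousAt_const.mul (c 0).continuousAt)
      refine this.eventually_lt_const ?_
      simp only [P3, P1, P0, ← hY0]
      simpa using hr
  obtain ⟨ε, hε, Hε⟩ := Metric.eventually_nhds_iff.1 ev
  refine ⟨ε, hε, fun v hv hvP => ?_⟩
  obtain ⟨⟨q1, q2, q3⟩, q4, q5⟩ := Hε (y := v) (by rwa [dist_eq_norm])
  set u0 := v 1 / (1 - v 1) with hu0
  have hu00 : 0 ≤ u0 := div_nonneg (hv 1).1 (by linarith)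
  have init : OmwuInv a ρ r K L Y0 v u0 := by
    refine ⟨_, hu00, (sg_inv q1).symm, ?_, (hv 0).1, (hv 2).2, q4, q5⟩
    rw [Real.exp_log (div_pos q2 (by linarith)), sg_inv q3]
  have key : ∀ n : ℕ, ∃ u, OmwuInv a ρ r K L Y0 ((G1 η ∘ G2 η)^[n] v) u ∧ u ≤ κ ^ n * u0 := by
    intro n
    induction n with
    | zero => exact ⟨u0, init, by simp⟩
    | succ n ih =>
      obtain ⟨u, hI, hu⟩ := ih
      obtain ⟨u', hI', hu', -⟩ := step _ _ hI
      rw [Function.iterate_succ_apply']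
      refine ⟨u', hI', hu'.trans ?_⟩
      have := mul_le_mul_of_nonneg_left hu hκ0.le
      rw [pow_succ]; linarith
  have lim : Filter.Tendsto (fun n : ℕ => κ ^ n * u0) Filter.atTop (nhds 0) := by
    simpa using (tendsto_pow_atTop_nhds_zero_of_lt_one hκ0.le hκ1).mul_const u0
  constructor
  · rw [← Filter.tendsto_add_atTop_iff_nat 1]
    have lim2 : Filter.Tendsto (fun n : ℕ => C * (κ ^ n * u0)) Filter.atTop (nhds 0) := by
      simpa using lim.const_mul C
    refine squeeze_zero (fun n => ?_) (fun n => ?_) lim2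
    · obtain ⟨u, ⟨Y, _, _, _, h0, _⟩, _⟩ := key (n + 1)
      exact h0
    · obtain ⟨u, hI, hu⟩ := key n
      obtain ⟨u', _, _, hx⟩ := step _ _ hI
      rw [Function.iterate_succ_apply']
      exact hx.trans (mul_le_mul_of_nonneg_left hu hC0.le)
  · refine squeeze_zero (fun n => ?_) (fun n => ?_) lim
    · obtain ⟨u, ⟨Y, hu, h1, _⟩, _⟩ := key n
      rw [h1]; exact sg_nonneg hu
    · obtain ⟨u, ⟨Y, hu, h1, _⟩, hle⟩ := key n
      rw [h1]; exact (sg_le_self hu).trans hle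
end
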